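/- There exists a code C ⊆ {0,1}^8 with |C| = 36 and d_Z(a,b) ≥ 2 for all distinct a, b ∈ C having exactly 76 free points (with weight distribution z_0 = 1, z_1 = 0, z_2 = 4, z_3 = 8, z_4 = 10, z_5 = 8, z_6 = 4, z_7 = 0, z_8 = 1), and every code C ⊆ {0,1}^8 with |C| = 36 and d_Z(a,b) ≥ 2 for all distinct a, b ∈ C has at most 76 free points. -/

import Mathlib

/-- Hamming weight of a binary word: the number of ones. -/
def wt {n : ℕ} (a : Fin n → Bool) : ℕ :=
  (Finset.univ.filter (fun i => a i = true)).card

/-- N(a,b) = number of positions where a is 0 and b is 1. -/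
def NN {n : ℕ} (a b : Fin n → Bool) : ℕ :=
  (Finset.univ.filter (fun i => a i = false ∧ b i = true)).card

/-- The Z-distance d_Z(a,b) = max(N(a,b), N(b,a)). -/
def dZ {n : ℕ} (a b : Fin n → Bool) : ℕ := max (NN a b) (NN b a)

/-- A code correcting one asymmetric error: d_Z(a,b) ≥ 2 for distinct codewords. -/
def IsZCode {n : ℕ} (C : Finset (Fin n → Bool)) : Prop :=
  ∀ a ∈ C, ∀ b ∈ C, a ≠ b → 2 ≤ dZ a b

/-- The output ball B_1(a): words obtainable from a by at most one asymmetric (1→0) error. -/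
def ball {n : ℕ} (a : Fin n → Bool) : Finset (Fin n → Bool) :=
  Finset.univ.filter (fun y => (∀ i, y i ≤ a i) ∧ wt a - wt y ≤ 1)

/-- The number of free points of a code: words lying in no ball B_1(a), a ∈ C. -/
def freeCount {n : ℕ} (C : Finset (Fin n → Bool)) : ℕ :=
  (Finset.univ.filter (fun y => ∀ a ∈ C, y ∉ ball a)).card

/-- A two-stage coding algorithm (c1, c2, dec) of lengths n1, n2 with message set `Fin M`
is successful if it correctly decodes under at most one asymmetric error in total. -/
def TwoStageSuccess (n1 n2 M : ℕ)
    (c1 : Fin M → (Fin n1 → Bool))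
    (c2 : Fin M → (Fin n1 → Bool) → (Fin n2 → Bool))
    (dec : (Fin n1 → Bool) → (Fin n2 → Bool) → Fin M) : Prop :=
  ∀ (m : Fin M) (y1 : Fin n1 → Bool) (y2 : Fin n2 → Bool),
    (∀ i, y1 i ≤ c1 m i) → (∀ i, y2 i ≤ c2 m y1 i) →
    (wt (c1 m) - wt y1) + (wt (c2 m y1) - wt y2) ≤ 1 →
    dec y1 y2 = m

/-!
The balls around the words of a code are disjoint, and the ball around `a` has `wt a + 1` points, so
the number of free points depends only on the weight distribution of the code.

Identify words with sets. At most one codeword of size `k` or `k + 1` contains a given set of size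
`k`; averaging this over one-point extensions, and rounding down along the way, bounds the numbers
of codewords in the layers of small size, as in the Johnson bound for packings. Complementation
turns these into bounds for the layers of large size. In length 8 they add up to 36 codewords, so
they are attained by every code of size 36: its weight distribution is forced, and it has exactly 76
free points.
-/

open Finset
open scoped FinsetFamily

section SetFamily

theorem sum_card_eq_sum_mul_card_slice {α : Type*} [Fintype α] (𝒜 : Finset (Finset α)) :
    ∑ A ∈ 𝒜, #A = ∑ k ∈ Iic (Fintype.card α), k * #(𝒜 # k) := by
  rw [← sum_fiberwise_of_maps_to fun A _ => mem_Iic.2 (card_le_univ A)]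
  refine sum_congr rfl fun k _ => ?_
  rw [sum_congr rfl fun A hA => (mem_filter.1 hA).2, sum_const, smul_eq_mul, mul_comm, slice]

variable {α : Type*} [DecidableEq α] {𝒜 ℬ : Finset (Finset α)} {A B U : Finset α} {k l : ℕ}

/-- The counterpart of `IsZCode` for families of sets, a word being identified with the set of
positions of its ones. -/
def IsZFamily (𝒜 : Finset (Finset α)) : Prop :=
  ∀ A ∈ 𝒜, ∀ B ∈ 𝒜, A ≠ B → 2 ≤ max #(A \ B) #(B \ A)

/-- The degree of a set `U` in a hypergraph `𝒜`: the number of edges containing `U`. -/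
def setDegree (𝒜 : Finset (Finset α)) (U : Finset α) : ℕ := #{A ∈ 𝒜 | U ⊆ A}

theorem setDegree_empty (𝒜 : Finset (Finset α)) : setDegree 𝒜 ∅ = #𝒜 := by
  simp [setDegree]

theorem IsZFamily.eq_of_subset (h𝒜 : IsZFamily 𝒜) (hA : A ∈ 𝒜) (hB : B ∈ 𝒜) (hUA : U ⊆ A)
    (hUB : U ⊆ B) (hA_card : #A ≤ #U + 1) (hB_card : #B ≤ #U + 1) : A = B := by
  by_contra hne
  have hdist := h𝒜 A hA B hB hne
  have hAB : #(A \ B) ≤ #A - #U :=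
    (card_le_card (sdiff_subset_sdiff subset_rfl hUB)).trans (card_sdiff_of_subset hUA).le
  have hBA : #(B \ A) ≤ #B - #U :=
    (card_le_card (sdiff_subset_sdiff subset_rfl hUA)).trans (card_sdiff_of_subset hUB).le
  omega

theorem IsZFamily.setDegree_slice_add_setDegree_slice_succ_le_one (h𝒜 : IsZFamily 𝒜)
    (hU : #U = k) : setDegree (𝒜 # k) U + setDegree (𝒜 # (k + 1)) U ≤ 1 := by
  have hdisj : Disjoint {A ∈ 𝒜 # k | U ⊆ A} {A ∈ 𝒜 # (k + 1) | U ⊆ A} :=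
    disjoint_filter_filter (pairwiseDisjoint_slice trivial trivial k.lt_succ_self.ne)
  rw [setDegree, setDegree, ← card_union_of_disjoint hdisj, card_le_one]
  have hmem : ∀ A ∈ {A ∈ 𝒜 # k | U ⊆ A} ∪ {A ∈ 𝒜 # (k + 1) | U ⊆ A},
      A ∈ 𝒜 ∧ U ⊆ A ∧ #A ≤ #U + 1 := by
    simp only [mem_union, mem_filter, mem_slice]
    grind
  intro A hA B hB
  obtain ⟨hA𝒜, hUA, hA_card⟩ := hmem A hA
  obtain ⟨hB𝒜, hUB, hB_card⟩ := hmem B hB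
  exact h𝒜.eq_of_subset hA𝒜 hB𝒜 hUA hUB hA_card hB_card

theorem IsZFamily.card_slice_zero_add_card_slice_one_le (h𝒜 : IsZFamily 𝒜) :
    #(𝒜 # 0) + #(𝒜 # 1) ≤ 1 := by
  simpa only [setDegree_empty] using
    h𝒜.setDegree_slice_add_setDegree_slice_succ_le_one (card_empty (α := α))

theorem card_insert_shadow_singleton (A : Finset α) : #(insert A (∂ {A})) = #A + 1 := by
  have hshadow : ∂ {A} = A.image A.erase := by rw [shadow, sup_singleton]
  have hA : A ∉ A.image A.erase := by simp [erase_eq_self]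
  rw [hshadow, card_insert_of_notMem hA, card_image_of_injOn A.erase_injOn]

variable [Fintype α]

theorem sum_setDegree_insert (h𝒜 : (𝒜 : Set (Finset α)).Sized k) (U : Finset α) :
    ∑ x ∈ Uᶜ, setDegree 𝒜 (insert x U) = (k - #U) * setDegree 𝒜 U := by
  calc ∑ x ∈ Uᶜ, setDegree 𝒜 (insert x U)
      = ∑ x ∈ Uᶜ, #{A ∈ {A ∈ 𝒜 | U ⊆ A} | x ∈ A} := by
        simp only [setDegree, insert_subset_iff, filter_filter, and_comm]
    _ = ∑ A ∈ 𝒜 with U ⊆ A, #{x ∈ Uᶜ | x ∈ A} :=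
        sum_card_bipartiteAbove_eq_sum_card_bipartiteBelow _
    _ = ∑ A ∈ 𝒜 with U ⊆ A, (k - #U) := by
        refine sum_congr rfl fun A hA => ?_
        obtain ⟨hA, hUA⟩ := mem_filter.1 hA
        rw [← h𝒜 hA, ← card_sdiff_of_subset hUA]
        congr 1
        ext x
        simp [and_comm]
    _ = (k - #U) * setDegree 𝒜 U := by rw [sum_const, smul_eq_mul, mul_comm, setDegree]

theorem mul_setDegree_add_mul_setDegree_le (h𝒜 : (𝒜 : Set (Finset α)).Sized k)
    (hℬ : (ℬ : Set (Finset α)).Sized l) {a b c : ℕ}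
    (h : ∀ x ∉ U, a * setDegree 𝒜 (insert x U) + b * setDegree ℬ (insert x U) ≤ c) :
    a * ((k - #U) * setDegree 𝒜 U) + b * ((l - #U) * setDegree ℬ U) ≤
      (Fintype.card α - #U) * c := by
  rw [← sum_setDegree_insert h𝒜, ← sum_setDegree_insert hℬ, mul_sum, mul_sum, ← sum_add_distrib,
    ← card_compl, ← smul_eq_mul]
  exact sum_le_card_nsmul _ _ _ fun x hx => h x (mem_compl.1 hx)

theorem IsZFamily.setDegree_slice_succ_add_two_mul_le (h𝒜 : IsZFamily 𝒜) (hU : #U = k) :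
    setDegree (𝒜 # (k + 1)) U + 2 * setDegree (𝒜 # (k + 2)) U ≤ Fintype.card α - k := by
  have h := mul_setDegree_add_mul_setDegree_le (U := U) (a := 1) (b := 1) (c := 1)
    (sized_slice (𝒜 := 𝒜) (r := k + 1)) (sized_slice (𝒜 := 𝒜) (r := k + 2)) fun x hx => by
      simpa only [one_mul] using h𝒜.setDegree_slice_add_setDegree_slice_succ_le_one
        (by rw [card_insert_of_notMem hx, hU])
  simpa [hU] using h

-- The rounding is essential: for `card α = 8` and `k = 2` it replaces `7 / 2` by `3`, without which
-- the bound on `#(𝒜 # 3) + 2 * #(𝒜 # 4)` would be `32` instead of `28`.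
theorem IsZFamily.setDegree_slice_succ_add_setDegree_slice_le (h𝒜 : IsZFamily 𝒜) (hU : #U = k) :
    setDegree (𝒜 # (k + 1)) U + setDegree (𝒜 # (k + 2)) U ≤ (Fintype.card α - k + 1) / 2 := by
  have hone := h𝒜.setDegree_slice_add_setDegree_slice_succ_le_one hU
  have htwo := h𝒜.setDegree_slice_succ_add_two_mul_le hU
  omega

theorem IsZFamily.two_mul_setDegree_slice_add_three_mul_le (h𝒜 : IsZFamily 𝒜) (hU : #U = k) :
    2 * setDegree (𝒜 # (k + 2)) U + 3 * setDegree (𝒜 # (k + 3)) U ≤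
      (Fintype.card α - k) * ((Fintype.card α - k) / 2) := by
  have h := mul_setDegree_add_mul_setDegree_le (U := U) (a := 1) (b := 1)
    (c := (Fintype.card α - k) / 2)
    (sized_slice (𝒜 := 𝒜) (r := k + 2)) (sized_slice (𝒜 := 𝒜) (r := k + 3)) fun x hx => by
      have hxU : #(insert x U) = k + 1 := by rw [card_insert_of_notMem hx, hU]
      have hle := h𝒜.setDegree_slice_succ_add_setDegree_slice_le hxU
      have hcard := card_le_univ (insert x U)
      rw [show Fintype.card α - (k + 1) + 1 = Fintype.card α - k by omega] at hle
      simpa only [one_mul] using hle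
  simpa [hU] using h

theorem IsZFamily.card_slice_one_add_two_mul_card_slice_two_le (h𝒜 : IsZFamily 𝒜) :
    #(𝒜 # 1) + 2 * #(𝒜 # 2) ≤ Fintype.card α := by
  simpa [setDegree_empty] using h𝒜.setDegree_slice_succ_add_two_mul_le (card_empty (α := α))

theorem IsZFamily.three_mul_card_slice_three_le (h𝒜 : IsZFamily 𝒜) :
    3 * #(𝒜 # 3) ≤ Fintype.card α * ((Fintype.card α - 1) / 2) := by
  have hpoint : ∀ x : α, setDegree (𝒜 # 3) (insert x ∅) ≤ (Fintype.card α - 1) / 2 := fun x => by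
    have hle : setDegree (𝒜 # 2) (insert x ∅) + 2 * setDegree (𝒜 # 3) (insert x ∅) ≤
        Fintype.card α - 1 := h𝒜.setDegree_slice_succ_add_two_mul_le (card_singleton x)
    omega
  calc 3 * #(𝒜 # 3) = ∑ x ∈ ∅ᶜ, setDegree (𝒜 # 3) (insert x ∅) := by
        rw [sum_setDegree_insert sized_slice, setDegree_empty, card_empty]
    _ ≤ #(∅ᶜ : Finset α) • ((Fintype.card α - 1) / 2) :=
        sum_le_card_nsmul _ _ _ fun x _ => hpoint x
    _ = Fintype.card α * ((Fintype.card α - 1) / 2) := by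
        rw [compl_empty, card_univ, smul_eq_mul]

theorem IsZFamily.six_mul_card_slice_three_add_twelve_mul_card_slice_four_le (h𝒜 : IsZFamily 𝒜) :
    6 * #(𝒜 # 3) + 12 * #(𝒜 # 4) ≤
      Fintype.card α * ((Fintype.card α - 1) * ((Fintype.card α - 1) / 2)) := by
  have h := mul_setDegree_add_mul_setDegree_le (U := ∅) (a := 2) (b := 3)
    (sized_slice (𝒜 := 𝒜) (r := 3)) (sized_slice (𝒜 := 𝒜) (r := 4)) fun x _ =>
      h𝒜.two_mul_setDegree_slice_add_three_mul_le (card_singleton x)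
  simpa [setDegree_empty, ← mul_assoc] using h

theorem IsZFamily.compls (h𝒜 : IsZFamily 𝒜) : IsZFamily 𝒜ᶜˢ := by
  simp only [IsZFamily, forall_mem_compls, compl_sdiff_compl]
  intro A hA B hB hne
  exact h𝒜 B hB A hA fun h => hne (h ▸ rfl)

theorem card_slice_compls (𝒜 : Finset (Finset α)) (h : k + l = Fintype.card α) :
    #(𝒜ᶜˢ # k) = #(𝒜 # l) := by
  rw [← card_compls (𝒜 # l)]
  congr 1
  ext A
  have hA := card_le_univ A
  simp only [mem_slice, mem_compls, card_compl, and_congr_right_iff]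
  omega

theorem IsZFamily.card_slice_le_of_card_eq_eight (h𝒜 : IsZFamily 𝒜) (hα : Fintype.card α = 8) :
    #(𝒜 # 0) + #(𝒜 # 1) ≤ 1 ∧ #(𝒜 # 1) + 2 * #(𝒜 # 2) ≤ 8 ∧ #(𝒜 # 3) ≤ 8 ∧
      #(𝒜 # 3) + 2 * #(𝒜 # 4) ≤ 28 := by
  have h01 := h𝒜.card_slice_zero_add_card_slice_one_le
  have h12 := h𝒜.card_slice_one_add_two_mul_card_slice_two_le
  have h3 := h𝒜.three_mul_card_slice_three_le
  have h34 := h𝒜.six_mul_card_slice_three_add_twelve_mul_card_slice_four_le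
  rw [hα] at h12 h3 h34
  omega

/- With `z k = #(𝒜 # k)`, the bounds on the lower layers give `z 0 + z 1 + z 2 ≤ 5`, those of the
complementary family give `z 6 + z 7 + z 8 ≤ 5`, and
`z 3 + z 4 + z 5 = (z 3 + 2 * z 4) / 2 + z 3 / 2 + z 5 ≤ 14 + 4 + 8 = 26`.
Since `5 + 26 + 5 = 36`, equality holds throughout. -/
theorem IsZFamily.card_slice_eq (h𝒜 : IsZFamily 𝒜) (hα : Fintype.card α = 8) (hcard : #𝒜 = 36)
    (k : ℕ) : #(𝒜 # k) = [1, 0, 4, 8, 10, 8, 4, 0, 1].getD k 0 := by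
  have hlow := h𝒜.card_slice_le_of_card_eq_eight hα
  have hhigh := h𝒜.compls.card_slice_le_of_card_eq_eight hα
  rw [card_slice_compls (k := 0) (l := 8) 𝒜 hα.symm,
    card_slice_compls (k := 1) (l := 7) 𝒜 hα.symm, card_slice_compls (k := 2) (l := 6) 𝒜 hα.symm,
    card_slice_compls (k := 3) (l := 5) 𝒜 hα.symm,
    card_slice_compls (k := 4) (l := 4) 𝒜 hα.symm] at hhigh
  have hsum := sum_card_slice 𝒜
  rw [hα, hcard, ← Nat.range_succ_eq_Iic] at hsum
  simp only [sum_range_succ, sum_range_zero] at hsum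
  rcases lt_or_ge k 9 with hk | hk
  · interval_cases k <;> simp only [List.getD_cons_succ, List.getD_cons_zero] <;> omega
  · rw [List.getD_eq_default _ _ hk, card_eq_zero, eq_empty_iff_forall_notMem]
    intro A hA
    have hA_card := card_le_univ A
    rw [(mem_slice.1 hA).2] at hA_card
    omega

theorem IsZFamily.sum_card_eq (h𝒜 : IsZFamily 𝒜) (hα : Fintype.card α = 8) (hcard : #𝒜 = 36) :
    ∑ A ∈ 𝒜, #A = 144 := by
  rw [sum_card_eq_sum_mul_card_slice, hα]
  simp only [h𝒜.card_slice_eq hα hcard]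
  rfl

end SetFamily

/-- An optimal code of length 8 as a set family, found by a search among the codes invariant under
rotation by two positions and given by one set from each orbit. Its members of size 2 and 3 are the
lines of the affine plane of order 3 with a point deleted. -/
def optimalFamily : Finset (Finset (Fin 8)) :=
  image₂ (fun r A => A.image (· + r)) {0, 2, 4, 6}
    {∅, {0, 4}, {1, 5}, {1, 2, 3}, {0, 2, 5}, {0, 2, 3, 4}, {0, 1, 4, 5}, {1, 3, 5, 6},
      {1, 2, 3, 4, 5}, {0, 1, 3, 4, 6}, {0, 1, 2, 4, 5, 6}, {0, 1, 3, 4, 5, 7}, univ}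

theorem isZFamily_optimalFamily : IsZFamily optimalFamily := by
  unfold IsZFamily
  decide +kernel

theorem card_optimalFamily : #optimalFamily = 36 := by
  decide +kernel

section Words

variable {n : ℕ} {a y : Fin n → Bool} {C : Finset (Fin n → Bool)}

/-- The identification of a binary word with the set of positions of its ones. -/
def onesEquiv (n : ℕ) : (Fin n → Bool) ≃ Finset (Fin n) where
  toFun a := {i | a i = true}
  invFun A i := decide (i ∈ A)
  left_inv a := by simp
  right_inv A := by simp

theorem mem_onesEquiv {i : Fin n} : i ∈ onesEquiv n a ↔ a i = true := by
  simp [onesEquiv]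

theorem card_onesEquiv (a : Fin n → Bool) : #(onesEquiv n a) = wt a := rfl

theorem card_onesEquiv_sdiff (a b : Fin n → Bool) : #(onesEquiv n a \ onesEquiv n b) = NN b a := by
  rw [NN]
  congr 1
  ext i
  simp [mem_onesEquiv, and_comm]

theorem isZFamily_map_onesEquiv_iff :
    IsZFamily (C.map (onesEquiv n).toEmbedding) ↔ IsZCode C := by
  simp only [IsZFamily, IsZCode, forall_mem_map, Equiv.coe_toEmbedding, card_onesEquiv_sdiff, dZ,
    max_comm, ne_eq, EmbeddingLike.apply_eq_iff_eq]

theorem slice_map_onesEquiv (C : Finset (Fin n → Bool)) (k : ℕ) :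
    (C.map (onesEquiv n).toEmbedding) # k = {a ∈ C | wt a = k}.map (onesEquiv n).toEmbedding := by
  rw [slice, filter_map]
  rfl

theorem mem_ball_iff :
    y ∈ ball a ↔ onesEquiv n y ⊆ onesEquiv n a ∧ #(onesEquiv n a) ≤ #(onesEquiv n y) + 1 := by
  simp only [ball, mem_filter, mem_univ, true_and, subset_iff, mem_onesEquiv, card_onesEquiv,
    Bool.le_iff_imp, Nat.sub_le_iff_le_add']

theorem map_ball_onesEquiv (a : Fin n → Bool) :
    (ball a).map (onesEquiv n).toEmbedding = insert (onesEquiv n a) (∂ {onesEquiv n a}) := by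
  ext Y
  obtain ⟨y, rfl⟩ := (onesEquiv n).surjective Y
  simp only [mem_map_equiv, Equiv.symm_apply_apply, mem_ball_iff, mem_insert,
    mem_shadow_iff_exists_sdiff, mem_singleton, exists_eq_left]
  constructor
  · rintro ⟨hsub, hcard⟩
    rcases (card_le_card hsub).eq_or_lt with heq | hlt
    · exact .inl (eq_of_subset_of_card_le hsub heq.ge)
    · exact .inr ⟨hsub, by rw [card_sdiff_of_subset hsub]; omega⟩
  · rintro (heq | ⟨hsub, hcard⟩)
    · simp [heq]
    · rw [card_sdiff_of_subset hsub] at hcard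
      exact ⟨hsub, by omega⟩

theorem card_ball (a : Fin n → Bool) : #(ball a) = wt a + 1 := by
  rw [← card_map (onesEquiv n).toEmbedding, map_ball_onesEquiv, card_insert_shadow_singleton,
    card_onesEquiv]

theorem IsZCode.pairwiseDisjoint_ball (hC : IsZCode C) :
    (C : Set (Fin n → Bool)).PairwiseDisjoint ball := by
  intro a ha b hb hne
  rw [Function.onFun, disjoint_left]
  intro y hya hyb
  rw [mem_ball_iff] at hya hyb
  refine hne ((onesEquiv n).injective ?_)
  exact (isZFamily_map_onesEquiv_iff.2 hC).eq_of_subset (mem_map_of_mem _ ha) (mem_map_of_mem _ hb)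
    hya.1 hyb.1 hya.2 hyb.2

theorem IsZCode.freeCount_add_sum (hC : IsZCode C) :
    freeCount C + ∑ a ∈ C, (wt a + 1) = 2 ^ n := by
  have hfree : freeCount C = #(C.biUnion ball)ᶜ := by
    rw [freeCount]
    congr 1
    ext y
    simp
  have hunion : #(C.biUnion ball) = ∑ a ∈ C, (wt a + 1) := by
    rw [card_biUnion hC.pairwiseDisjoint_ball]
    simp only [card_ball]
  rw [hfree, ← hunion, card_compl_add_card]
  simp

theorem IsZCode.card_filter_wt_eq {C : Finset (Fin 8 → Bool)} (hC : IsZCode C) (hcard : #C = 36)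
    (k : ℕ) : #{a ∈ C | wt a = k} = [1, 0, 4, 8, 10, 8, 4, 0, 1].getD k 0 := by
  rw [← (isZFamily_map_onesEquiv_iff.2 hC).card_slice_eq (Fintype.card_fin 8)
    ((card_map _).trans hcard), slice_map_onesEquiv, card_map]

theorem IsZCode.freeCount_eq {C : Finset (Fin 8 → Bool)} (hC : IsZCode C) (hcard : #C = 36) :
    freeCount C = 76 := by
  have hsum := (isZFamily_map_onesEquiv_iff.2 hC).sum_card_eq (Fintype.card_fin 8)
    ((card_map _).trans hcard)
  simp only [sum_map, Equiv.coe_toEmbedding, card_onesEquiv] at hsum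
  have hcount := hC.freeCount_add_sum
  rw [sum_add_distrib, hsum, sum_const, hcard, smul_eq_mul] at hcount
  omega

end Words

theorem F_optimal_code_length_8 :
    (∃ C : Finset (Fin 8 → Bool), IsZCode C ∧ C.card = 36 ∧ freeCount C = 76 ∧
      ∀ i, (C.filter (fun a => wt a = i)).card =
        [1, 0, 4, 8, 10, 8, 4, 0, 1].getD i 0) ∧
    (∀ C : Finset (Fin 8 → Bool), IsZCode C → C.card = 36 → freeCount C ≤ 76) := by
  refine ⟨?_, fun C hC hcard => (hC.freeCount_eq hcard).le⟩
  let C := optimalFamily.map (onesEquiv 8).symm.toEmbedding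
  have hC : IsZCode C := by
    rw [← isZFamily_map_onesEquiv_iff]
    simpa [C, map_map] using isZFamily_optimalFamily
  have hcard : #C = 36 := (card_map _).trans card_optimalFamily
  exact ⟨C, hC, hcard, hC.freeCount_eq hcard, hC.card_filter_wt_eq hcard⟩
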